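/- Let K be a field, m ≥ 1 a natural number, and q ∈ K a nonzero element such that q^{2k} ≠ 1 for all 1 ≤ k ≤ m. Then for all w, z_1, …, z_m ∈ K, the following combinatorial identity holds: ∑_{σ ∈ S_m} ∑_{r=0}^{m} sgn(σ) [m choose r] · (∏_{k=1}^{r} (w − q^{1−m} z_{σ(k)})) · (∏_{k=r+1}^{m} (z_{σ(k)} − q^{1−m} w)) · (∏_{1 ≤ i < j ≤ m} (z_{σ(i)} − q^{−2} z_{σ(j)})) = 0, where S_m is the symmetric group on {1, …, m} and sgn(σ) is the sign of the permutation σ. -/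

import Mathlib

/-- The symmetric q-integer [k] = (q^k - q^{-k})/(q - q^{-1}). -/
noncomputable def qInt {K : Type*} [Field K] (q : K) (k : ℕ) : K :=
  (q ^ (k : ℤ) - q ^ (-(k : ℤ))) / (q - q⁻¹)

/-- The symmetric q-factorial [k]! = [1][2]⋯[k]. -/
noncomputable def qFact {K : Type*} [Field K] (q : K) (k : ℕ) : K :=
  ∏ i ∈ Finset.range k, qInt q (i + 1)

/-- The symmetric q-binomial coefficient [n choose r] = [n]!/([r]![n-r]!). -/
noncomputable def qBinom {K : Type*} [Field K] (q : K) (n r : ℕ) : K :=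
  qFact q n / (qFact q r * qFact q (n - r))

/-!
Put `t = q⁻²`. Replacing the linear factors `w - q^(1-m) z (σ k)` and `z (σ k) - q^(1-m) w` by
arbitrary `a k * z (σ k) + b k * t ^ k` turns the alternating sum over `σ` into a multilinear
function of the pairs `(a k, b k)`. This function is symmetric: exchanging two adjacent pairs
changes the product of the factors by a multiple of `z (σ (k + 1)) - t * z (σ k)`, whose product
with the deformed Vandermonde product is invariant under exchanging `σ k` and `σ (k + 1)`, so its
alternating sum vanishes.

A symmetric multilinear function of the pairs `(a k, b k)` depends linearly on the polynomial
`∏ k, (a k * X + b k)`. So it suffices to prove the identity for these polynomials. There, up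
to a factor independent of `r`, the `r`-th summand is `(-q^(1-m))^r [m choose r]` times the value at
`q^(2r)` of a polynomial of degree `m - 1`. The sum is thus an `m`-th `q`-difference, which vanishes
by the `q`-binomial theorem.
-/

open Finset Polynomial

section QBinomial

variable {K : Type*} [Field K] {q : K}

lemma qInt_ne_zero (hq : q ≠ 0) {k : ℕ} (hk : q ^ (2 * k) ≠ 1) : qInt q k ≠ 0 := by
  have sub_inv_ne_zero {x : K} (hx : x ≠ 0) (h : x ^ 2 ≠ 1) : x - x⁻¹ ≠ 0 := fun h0 ↦
    h <| by rw [sq]; nth_rewrite 1 [sub_eq_zero.mp h0]; exact inv_mul_cancel₀ hx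
  rw [qInt, zpow_neg, zpow_natCast]
  exact div_ne_zero (sub_inv_ne_zero (pow_ne_zero k hq) (by rwa [← pow_mul']))
    (sub_inv_ne_zero hq fun h ↦ hk (by rw [pow_mul, h, one_pow]))

lemma qInt_add (hq : q ≠ 0) (a b : ℕ) :
    qInt q (a + b) = q ^ a * qInt q b + q ^ (-b : ℤ) * qInt q a := by
  simp only [qInt, zpow_neg, zpow_natCast, pow_add, mul_div_assoc', ← add_div]
  congr 1
  field_simp
  ring

@[simp]
lemma qFact_zero : qFact q 0 = 1 :=
  prod_range_zero _

lemma qFact_succ (n : ℕ) : qFact q (n + 1) = qFact q n * qInt q (n + 1) :=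
  prod_range_succ _ n

lemma qFact_ne_zero_of_le {m n : ℕ} (hmn : m ≤ n) (hn : qFact q n ≠ 0) : qFact q m ≠ 0 :=
  ne_zero_of_dvd_ne_zero hn (prod_dvd_prod_of_subset _ _ _ (range_subset_range.mpr hmn))

lemma qFact_ne_zero (hq : q ≠ 0) {m : ℕ} (hroot : ∀ k, 1 ≤ k → k ≤ m → q ^ (2 * k) ≠ 1) :
    qFact q m ≠ 0 :=
  prod_ne_zero_iff.mpr fun i hi ↦
    qInt_ne_zero hq (hroot (i + 1) i.succ_pos (mem_range.mp hi))

lemma qBinom_zero_right {n : ℕ} (hn : qFact q n ≠ 0) : qBinom q n 0 = 1 := by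
  simp [qBinom, hn]

lemma qBinom_self {n : ℕ} (hn : qFact q n ≠ 0) : qBinom q n n = 1 := by
  simp [qBinom, hn]

lemma qBinom_succ_succ (hq : q ≠ 0) {n r : ℕ} (hr : r < n) (hn : qFact q (n + 1) ≠ 0) :
    qBinom q (n + 1) (r + 1) =
      q ^ (r + 1) * qBinom q n (r + 1) + q ^ (r - n : ℤ) * qBinom q n r := by
  obtain ⟨s, rfl⟩ := Nat.exists_eq_add_of_lt hr
  have hs : qFact q (s + 1) ≠ 0 := qFact_ne_zero_of_le (by lia) hn
  have hr' : qFact q (r + 1) ≠ 0 := qFact_ne_zero_of_le (by lia) hn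
  have hadd := qInt_add hq (r + 1) (s + 1)
  rw [qFact_succ] at hs hr'
  rw [qBinom, qBinom, qBinom, show r + s + 1 + 1 - (r + 1) = s + 1 by lia,
    show r + s + 1 - (r + 1) = s by lia, show r + s + 1 - r = s + 1 by lia,
    qFact_succ (r + s + 1), qFact_succ r, qFact_succ s,
    show r + s + 1 + 1 = r + 1 + (s + 1) by lia, hadd,
    show (r - (r + s + 1 : ℕ) : ℤ) = -(s + 1 : ℕ) by push_cast; ring]
  have := left_ne_zero_of_mul hs
  have := right_ne_zero_of_mul hs
  have := left_ne_zero_of_mul hr'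
  have := right_ne_zero_of_mul hr'
  field_simp

lemma sum_qBinom_succ_mul_pow (hq : q ≠ 0) {m : ℕ} (hm : qFact q (m + 1) ≠ 0) (y : K) :
    ∑ r ∈ range (m + 2), qBinom q (m + 1) r * y ^ r =
      (1 + q ^ (-m : ℤ) * y) * ∑ r ∈ range (m + 1), qBinom q m r * (q * y) ^ r := by
  have hm' : qFact q m ≠ 0 := qFact_ne_zero_of_le m.le_succ hm
  have hpascal : ∀ r ∈ range m, qBinom q (m + 1) (r + 1) * y ^ (r + 1) =
      qBinom q m (r + 1) * (q * y) ^ (r + 1) +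
        q ^ (-m : ℤ) * y * (qBinom q m r * (q * y) ^ r) := by
    intro r hr
    rw [qBinom_succ_succ hq (mem_range.mp hr) hm, sub_eq_neg_add, zpow_add₀ hq, zpow_natCast]
    ring
  have hlast : q ^ (-m : ℤ) * y * (q * y) ^ m = y ^ (m + 1) := by
    rw [zpow_neg, zpow_natCast, mul_pow, pow_succ']
    field_simp
  have hbot := sum_range_succ' (fun r ↦ qBinom q m r * (q * y) ^ r) m
  have htop := sum_range_succ (fun r ↦ qBinom q m r * (q * y) ^ r) m
  rw [qBinom_zero_right hm'] at hbot
  rw [qBinom_self hm'] at htop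
  rw [sum_range_succ, sum_range_succ', sum_congr rfl hpascal, sum_add_distrib, ← mul_sum,
    qBinom_zero_right hm, qBinom_self hm]
  linear_combination -hbot - q ^ (-m : ℤ) * y * htop - hlast

theorem prod_one_add_zpow_mul_eq_sum_qBinom (hq : q ≠ 0) {m : ℕ} (hm : qFact q m ≠ 0) (y : K) :
    ∏ i ∈ range m, (1 + q ^ (m - 1 - 2 * i : ℤ) * y) =
      ∑ r ∈ range (m + 1), qBinom q m r * y ^ r := by
  induction m generalizing y with
  | zero => simp [qBinom]
  | succ m ih =>
    have hprod : ∏ i ∈ range m, (1 + q ^ ((m + 1 : ℕ) - 1 - 2 * i : ℤ) * y) =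
        ∏ i ∈ range m, (1 + q ^ (m - 1 - 2 * i : ℤ) * (q * y)) := by
      refine prod_congr rfl fun i _ ↦ ?_
      rw [← mul_assoc, ← zpow_add_one₀ hq]
      congr 3
      push_cast
      ring
    have hexp : ((m + 1 : ℕ) - 1 - 2 * m : ℤ) = -m := by
      push_cast
      ring
    rw [sum_qBinom_succ_mul_pow hq hm, prod_range_succ, hprod,
      ih (qFact_ne_zero_of_le m.le_succ hm), hexp, mul_comm]

lemma sum_neg_zpow_mul_qBinom_mul_pow_eq_zero (hq : q ≠ 0) {n j : ℕ} (hj : j ≤ n)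
    (hn : qFact q (n + 1) ≠ 0) :
    ∑ r ∈ range (n + 2), (-q ^ (-n : ℤ)) ^ r * qBinom q (n + 1) r * (q ^ (2 * r)) ^ j = 0 := by
  set y : K := -q ^ (-n : ℤ) * q ^ (2 * j) with hy
  have hroot : 1 + q ^ ((n + 1 : ℕ) - 1 - 2 * j : ℤ) * y = 0 := by
    rw [hy, ← zpow_natCast q (2 * j), neg_mul, mul_neg, ← zpow_add₀ hq, ← zpow_add₀ hq]
    push_cast
    ring_nf
    simp
  calc ∑ r ∈ range (n + 2), (-q ^ (-n : ℤ)) ^ r * qBinom q (n + 1) r * (q ^ (2 * r)) ^ j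
      = ∑ r ∈ range (n + 2), qBinom q (n + 1) r * y ^ r := sum_congr rfl fun r _ ↦ by ring
    _ = ∏ i ∈ range (n + 1), (1 + q ^ ((n + 1 : ℕ) - 1 - 2 * i : ℤ) * y) :=
        (prod_one_add_zpow_mul_eq_sum_qBinom hq hn y).symm
    _ = 0 := prod_eq_zero (mem_range.mpr (Nat.lt_succ_of_le hj)) hroot

theorem sum_qBinom_smul_eval_eq_zero {R : Type*} [CommRing R] [Algebra K R] (hq : q ≠ 0) {n : ℕ}
    (hn : qFact q (n + 1) ≠ 0) {p : R[X]} (hp : p.natDegree ≤ n) :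
    ∑ r ∈ range (n + 2),
      ((-q ^ (-n : ℤ)) ^ r * qBinom q (n + 1) r) • p.eval (algebraMap K R (q ^ (2 * r))) = 0 := by
  simp only [eval_eq_sum_range' (Nat.lt_succ_of_le hp), smul_sum]
  rw [sum_comm]
  refine sum_eq_zero fun j hj ↦ ?_
  simp only [← map_pow, mul_comm (p.coeff j), ← Algebra.smul_def, smul_smul, ← sum_smul]
  rw [sum_neg_zpow_mul_qBinom_mul_pow_eq_zero hq (mem_range_succ_iff.mp hj) hn, zero_smul]

lemma prod_range_add_mul_prod_Ico {M : Type*} [CommMonoid M] (g : ℕ → M) {n r : ℕ}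
    (hr : r ≤ n + 1) :
    (∏ k ∈ range r, g (n + k)) * ∏ k ∈ Ico r (n + 1), g k = g n * ∏ k ∈ range n, g (r + k) := by
  rcases r with - | r
  · simp [prod_range_succ, mul_comm]
  calc (∏ k ∈ range (r + 1), g (n + k)) * ∏ k ∈ Ico (r + 1) (n + 1), g k
      = g n * ((∏ k ∈ Ico (r + 1) (n + 1), g k) * ∏ k ∈ Ico (n + 1) (n + 1 + r), g k) := by
        rw [prod_range_succ', prod_Ico_eq_prod_range g (n + 1), Nat.add_sub_cancel_left, add_zero,
          mul_comm _ (g n), mul_assoc, mul_comm (∏ k ∈ range r, _)]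
        simp only [add_assoc, add_comm 1]
    _ = g n * ∏ k ∈ range n, g (r + 1 + k) := by
        rw [prod_Ico_consecutive g hr (by lia), prod_Ico_eq_prod_range]
        congr 3
        lia

theorem sum_qBinom_smul_prod_mul_prod_eq_zero {R : Type*} [CommRing R] [Algebra K R] (hq : q ≠ 0)
    {n : ℕ} (hn : qFact q (n + 1) ≠ 0) (x y : R) :
    ∑ r ∈ range (n + 2), qBinom q (n + 1) r •
      ((∏ k ∈ range r, (q ^ (2 * k) • y - q ^ (-n : ℤ) • x)) *
        ∏ k ∈ Ico r (n + 1), (x - (q ^ (-n : ℤ) * q ^ (2 * k)) • y)) = 0 := by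
  set g : ℕ → R := fun k ↦ x - (q ^ (-n : ℤ) * q ^ (2 * k)) • y with hg
  let p : R[X] := ∏ k ∈ range n, (C x - C ((q ^ (-n : ℤ) * q ^ (2 * k)) • y) * X)
  have hp : p.natDegree ≤ n := by
    have hdeg (k : ℕ) :
        (C x - C ((q ^ (-n : ℤ) * q ^ (2 * k)) • y) * X : R[X]).natDegree ≤ 1 := by
      compute_degree
    exact (natDegree_prod_le _ _).trans <| by
      simpa using sum_le_card_nsmul (range n) _ 1 fun k _ ↦ hdeg k
  have heval (r : ℕ) : p.eval (algebraMap K R (q ^ (2 * r))) = ∏ k ∈ range n, g (r + k) := by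
    simp only [p, eval_prod, eval_sub, eval_mul, eval_C, eval_X, mul_comm _ (algebraMap K R _),
      ← Algebra.smul_def, smul_smul, hg]
    refine prod_congr rfl fun k _ ↦ ?_
    congr 2
    ring
  have hfactor (k : ℕ) : q ^ (2 * k) • y - q ^ (-n : ℤ) • x = (-q ^ (-n : ℤ)) • g (n + k) := by
    have hscalar : q ^ (-n : ℤ) * (q ^ (-n : ℤ) * q ^ (2 * (n + k))) = q ^ (2 * k) := by
      rw [zpow_neg, zpow_natCast]
      field_simp
      ring
    rw [neg_smul, smul_sub, smul_smul, hscalar, neg_sub]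
  have hdiff := congrArg (g n * ·) (sum_qBinom_smul_eval_eq_zero hq hn hp)
  simp only [mul_zero, mul_sum, mul_smul_comm, heval] at hdiff
  rw [← hdiff]
  refine sum_congr rfl fun r hr ↦ ?_
  rw [prod_congr rfl fun k _ ↦ hfactor k, ← smul_prod _ _ fun k ↦ g (n + k), card_range,
    smul_mul_assoc, prod_range_add_mul_prod_Ico g (mem_range_succ_iff.mp hr), smul_smul, mul_comm]

end QBinomial

section SymmetricMultilinear

lemma exists_perm_mem_iff_mem {ι : Type*} [Finite ι] {S T : Finset ι} (h : #S = #T) :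
    ∃ σ : Equiv.Perm ι, ∀ k, σ k ∈ T ↔ k ∈ S := by
  classical
  let e := S.equivOfCardEq h
  exact ⟨e.extendSubtype,
    fun k ↦ ⟨not_imp_not.mp (e.extendSubtype_not_mem k), e.extendSubtype_mem k⟩⟩

variable {ι R M : Type*} [Fintype ι] [CommSemiring R] [AddCommMonoid M] [Module R M]

lemma multilinearMap_prod_eq_sum_piecewise [DecidableEq ι]
    (f : MultilinearMap R (fun _ : ι ↦ R × R) M) (v : ι → R × R) :
    f v = ∑ S : Finset ι,
      ((∏ k ∈ S, (v k).1) * ∏ k ∈ Sᶜ, (v k).2) •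
        f (S.piecewise (fun _ ↦ (1, 0)) fun _ ↦ (0, 1)) := by
  let e₁ : R × R := (1, 0)
  let e₂ : R × R := (0, 1)
  have hv : v = (fun k ↦ (v k).1 • e₁) + fun k ↦ (v k).2 • e₂ := by
    ext k <;> simp [e₁, e₂]
  rw [congrArg f hv, f.map_add_univ]
  refine sum_congr rfl fun S _ ↦ ?_
  have hS : S.piecewise (fun k ↦ (v k).1 • e₁) (fun k ↦ (v k).2 • e₂) = fun k ↦
      S.piecewise (fun k ↦ (v k).1) (fun k ↦ (v k).2) k •
        S.piecewise (fun _ ↦ e₁) (fun _ ↦ e₂) k := by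
    ext1 k
    by_cases hk : k ∈ S <;> simp [hk]
  rw [hS, f.map_smul_univ, prod_piecewise, univ_inter, compl_eq_univ_sdiff]

/-- The polynomials of degree at most the cardinality of `ι` realise the
corresponding symmetric power of `R × R`. -/
theorem exists_linearMap_polynomial_of_symmetric (f : MultilinearMap R (fun _ : ι ↦ R × R) M)
    (hf : ∀ (σ : Equiv.Perm ι) v, f (v ∘ σ) = f v) :
    ∃ φ : R[X] →ₗ[R] M, ∀ v, f v = φ (∏ k, (C (v k).1 * X + C (v k).2)) := by
  classical
  obtain ⟨c, hc⟩ : ∃ c : ℕ → M, ∀ S : Finset ι,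
      f (S.piecewise (fun _ ↦ (1, 0)) fun _ ↦ (0, 1)) = c #S := by
    suffices h : (fun S : Finset ι ↦
        f (S.piecewise (fun _ ↦ (1, 0)) fun _ ↦ (0, 1))).FactorsThrough card by
      obtain ⟨c, hc⟩ := (Function.factorsThrough_iff _).mp h
      exact ⟨c, congrFun hc⟩
    intro S T hST
    obtain ⟨σ, hσ⟩ := exists_perm_mem_iff_mem hST
    refine Eq.trans (congrArg f (funext fun k ↦ ?_)) (hf σ _)
    simp [Finset.piecewise, hσ]
  refine ⟨(basisMonomials R).constr R c, fun v ↦ ?_⟩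
  rw [multilinearMap_prod_eq_sum_piecewise, prod_add, powerset_univ, map_sum]
  refine sum_congr rfl fun S _ ↦ ?_
  have hmonomial : (∏ k ∈ S, C (v k).1 * X) * ∏ k ∈ univ \ S, C (v k).2 =
      ((∏ k ∈ S, (v k).1) * ∏ k ∈ Sᶜ, (v k).2) • basisMonomials R #S := by
    rw [prod_mul_distrib, prod_const, ← map_prod, ← map_prod, coe_basisMonomials,
      smul_eq_C_mul, C_mul, compl_eq_univ_sdiff, X_pow_eq_monomial]
    ring
  rw [hmonomial, map_smul, Module.Basis.constr_basis, hc]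

end SymmetricMultilinear

section TwistedAlternant

variable {R : Type*} [CommRing R]

lemma sum_sign_mul_comp_eq_zero_of_swap {ι α : Type*} [Fintype ι] [DecidableEq ι] {F : (ι → α) → R}
    {a b : ι} (hab : a ≠ b) (hF : ∀ u, F (u ∘ Equiv.swap a b) = F u) (z : ι → α) :
    ∑ σ : Equiv.Perm ι, ((Equiv.Perm.sign σ : ℤ) : R) * F (z ∘ σ) = 0 := by
  refine sum_involution (fun σ _ ↦ σ * Equiv.swap a b) (fun σ _ ↦ ?_) (fun σ _ _ h ↦ ?_)
    (fun _ _ ↦ mem_univ _) (fun σ _ ↦ Equiv.mul_swap_mul_self a b σ)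
  · rw [Equiv.Perm.coe_mul, ← Function.comp_assoc, hF, Equiv.Perm.sign_mul,
      Equiv.Perm.sign_swap hab]
    simp
  · exact hab (Equiv.swap_eq_one_iff.mp (mul_eq_left.mp h))

/-- The deformation `∏ i < j, (z i - t * z j)` of the Vandermonde product, to which it
specializes up to sign at `t = 1`. -/
def twistedVandermonde {m : ℕ} (t : R) (z : Fin m → R) : R :=
  ∏ p : Fin m × Fin m with p.1 < p.2, (z p.1 - t * z p.2)

lemma sub_mul_twistedVandermonde_comp_swap {n : ℕ} (t : R) (z : Fin (n + 1) → R) (i : Fin n) :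
    (z i.castSucc - t * z i.succ) *
        twistedVandermonde t (z ∘ Equiv.swap i.castSucc i.succ) =
      (z i.succ - t * z i.castSucc) * twistedVandermonde t z := by
  set τ := Equiv.swap i.castSucc i.succ with hτ
  set P := ({p | p.1 < p.2} : Finset (Fin (n + 1) × Fin (n + 1))) with hP
  have hi : (i.castSucc, i.succ) ∈ P := by simp [hP]
  have hrest : ∏ p ∈ P.erase (i.castSucc, i.succ), (z (τ p.1) - t * z (τ p.2)) =
      ∏ p ∈ P.erase (i.castSucc, i.succ), (z p.1 - t * z p.2) := by
    refine prod_equiv (τ.prodCongr τ) (fun p ↦ ?_) fun p _ ↦ rfl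
    simp only [hP, hτ, mem_erase, mem_filter, mem_univ, true_and, ne_eq, Equiv.prodCongr_apply,
      Prod.map, Prod.ext_iff, Equiv.swap_apply_def, Fin.lt_def, Fin.ext_iff]
    split_ifs <;> simp_all <;> lia
  rw [twistedVandermonde, twistedVandermonde, ← mul_prod_erase _ _ hi, ← mul_prod_erase _ _ hi]
  simp only [Function.comp_apply, hrest]
  rw [hτ, Equiv.swap_apply_left, Equiv.swap_apply_right]
  ring

/-- The alternating sum over `σ` of `∏ k, (a k * z (σ k) + b k * t ^ k)` times the twisted
Vandermonde product of `z ∘ σ`, as a multilinear function of the pairs `(a k, b k)`. The power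
`t ^ k` is what makes it symmetric. -/
def twistedAlternant {m : ℕ} (t : R) (z : Fin m → R) :
    MultilinearMap R (fun _ : Fin m ↦ R × R) R :=
  ∑ σ : Equiv.Perm (Fin m), (((Equiv.Perm.sign σ : ℤ) : R) * twistedVandermonde t (z ∘ σ)) •
    (MultilinearMap.mkPiAlgebra R (Fin m) R).compLinearMap fun k ↦
      z (σ k) • LinearMap.fst R R R + t ^ (k : ℕ) • LinearMap.snd R R R

lemma twistedAlternant_apply {m : ℕ} (t : R) (z : Fin m → R) (v : Fin m → R × R) :
    twistedAlternant t z v = ∑ σ : Equiv.Perm (Fin m), ((Equiv.Perm.sign σ : ℤ) : R) *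
      ((∏ k, ((v k).1 * z (σ k) + (v k).2 * t ^ (k : ℕ))) * twistedVandermonde t (z ∘ σ)) := by
  simp only [twistedAlternant, _root_.sum_apply, smul_apply,
    MultilinearMap.compLinearMap_apply, MultilinearMap.mkPiAlgebra_apply, LinearMap.add_apply,
    LinearMap.smul_apply, LinearMap.fst_apply, LinearMap.snd_apply, smul_eq_mul]
  refine sum_congr rfl fun σ _ ↦ ?_
  simp only [mul_comm (z _), mul_comm (t ^ _)]
  ring

lemma exists_prod_comp_swap_sub_prod_eq {n : ℕ} (t : R) (i : Fin n) (v : Fin (n + 1) → R × R) :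
    ∃ G : (Fin (n + 1) → R) → R, (∀ u, G (u ∘ Equiv.swap i.castSucc i.succ) = G u) ∧
      ∀ u, (∏ k, (((v ∘ Equiv.swap i.castSucc i.succ) k).1 * u k +
          ((v ∘ Equiv.swap i.castSucc i.succ) k).2 * t ^ (k : ℕ))) -
        ∏ k, ((v k).1 * u k + (v k).2 * t ^ (k : ℕ)) =
          G u * (u i.succ - t * u i.castSucc) := by
  set τ := Equiv.swap i.castSucc i.succ with hτ
  let rest : Finset (Fin (n + 1)) := {i.castSucc, i.succ}ᶜ
  have hrest {k : Fin (n + 1)} (hk : k ∈ rest) : τ k = k := by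
    have hk' : k ≠ i.castSucc ∧ k ≠ i.succ := by simpa [rest] using hk
    exact Equiv.swap_apply_of_ne_of_ne hk'.1 hk'.2
  refine ⟨fun u ↦ ((v i.castSucc).1 * (v i.succ).2 - (v i.succ).1 * (v i.castSucc).2) *
    t ^ (i : ℕ) * ∏ k ∈ rest, ((v k).1 * u k + (v k).2 * t ^ (k : ℕ)), fun u ↦ ?_, fun u ↦ ?_⟩
  · exact congrArg _ (prod_congr rfl fun k hk ↦ by rw [Function.comp_apply, hrest hk])
  · have hcongr : ∏ k ∈ rest, (((v ∘ τ) k).1 * u k + ((v ∘ τ) k).2 * t ^ (k : ℕ)) =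
        ∏ k ∈ rest, ((v k).1 * u k + (v k).2 * t ^ (k : ℕ)) :=
      prod_congr rfl fun k hk ↦ by rw [Function.comp_apply, hrest hk]
    rw [← prod_mul_prod_compl {i.castSucc, i.succ}, hcongr,
      ← prod_mul_prod_compl {i.castSucc, i.succ} fun k ↦ (v k).1 * u k + (v k).2 * t ^ (k : ℕ),
      prod_pair i.castSucc_lt_succ.ne, prod_pair i.castSucc_lt_succ.ne]
    simp only [hτ, Function.comp_apply, Equiv.swap_apply_left, Equiv.swap_apply_right,
      Fin.val_castSucc, Fin.val_succ]
    ring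

lemma twistedAlternant_comp_swap {n : ℕ} (t : R) (z : Fin (n + 1) → R) (i : Fin n)
    (v : Fin (n + 1) → R × R) :
    twistedAlternant t z (v ∘ Equiv.swap i.castSucc i.succ) = twistedAlternant t z v := by
  obtain ⟨G, hGswap, hG⟩ := exists_prod_comp_swap_sub_prod_eq t i v
  let F (u : Fin (n + 1) → R) : R :=
    G u * ((u i.succ - t * u i.castSucc) * twistedVandermonde t u)
  have hF (u : Fin (n + 1) → R) : F (u ∘ Equiv.swap i.castSucc i.succ) = F u := by
    simp only [F, hGswap, Function.comp_apply, Equiv.swap_apply_left, Equiv.swap_apply_right,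
      sub_mul_twistedVandermonde_comp_swap]
  rw [← sub_eq_zero, twistedAlternant_apply, twistedAlternant_apply, ← sum_sub_distrib,
    ← sum_sign_mul_comp_eq_zero_of_swap i.castSucc_lt_succ.ne hF z]
  refine sum_congr rfl fun σ _ ↦ ?_
  rw [← mul_sub, ← sub_mul]
  exact congrArg _ ((congrArg (· * twistedVandermonde t (z ∘ σ)) (hG (z ∘ σ))).trans
    (mul_assoc _ _ _))

theorem twistedAlternant_comp_perm {n : ℕ} (t : R) (z : Fin (n + 1) → R)
    (σ : Equiv.Perm (Fin (n + 1))) (v : Fin (n + 1) → R × R) :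
    twistedAlternant t z (v ∘ σ) = twistedAlternant t z v := by
  have hσ : σ ∈ Submonoid.closure (Set.range fun i : Fin n ↦ Equiv.swap i.castSucc i.succ) :=
    Equiv.Perm.mclosure_swap_castSucc_succ n ▸ Submonoid.mem_top σ
  induction hσ using Submonoid.closure_induction generalizing v with
  | mem _ hτ =>
    obtain ⟨i, rfl⟩ := hτ
    exact twistedAlternant_comp_swap t z i v
  | one => rfl
  | mul σ τ _ _ hσ hτ => rw [Equiv.Perm.coe_mul, ← Function.comp_assoc, hτ, hσ]

end TwistedAlternant

lemma prod_fin_ite_lt {M : Type*} [CommMonoid M] {m r : ℕ} (hr : r ≤ m) (f g : ℕ → M) :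
    (∏ k : Fin m, if (k : ℕ) < r then f k else g k) =
      (∏ k ∈ range r, f k) * ∏ k ∈ Ico r m, g k := by
  rw [Fin.prod_univ_eq_prod_range (fun k ↦ if k < r then f k else g k) m,
    ← prod_range_mul_prod_Ico _ hr]
  congr 1
  · exact prod_congr rfl fun k hk ↦ if_pos (mem_range.mp hk)
  · exact prod_congr rfl fun k hk ↦ if_neg (mem_Ico.mp hk).1.not_gt

section Ser2

variable {K : Type*} [Field K]

/-- The coefficients `(a k, b k)` for which `a k * z (σ k) + b k * q ^ (-2 * k)` is the `k`-th
linear factor of the `r`-th summand of the identity. -/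
def ser2Coeff (n : ℕ) (q w : K) (r : ℕ) (k : Fin (n + 1)) : K × K :=
  if (k : ℕ) < r then (-q ^ (-n : ℤ), q ^ (2 * (k : ℕ)) * w)
  else (1, -(q ^ (-n : ℤ) * q ^ (2 * (k : ℕ)) * w))

lemma ser2Coeff_linear_eq {n : ℕ} {q : K} (hq : q ≠ 0) (w x : K) (r : ℕ) (k : Fin (n + 1)) :
    (ser2Coeff n q w r k).1 * x + (ser2Coeff n q w r k).2 * (q ^ (-2 : ℤ)) ^ (k : ℕ) =
      if (k : ℕ) < r then w - q ^ (-n : ℤ) * x else x - q ^ (-n : ℤ) * w := by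
  have hinv : q ^ (2 * (k : ℕ)) * (q ^ (-2 : ℤ)) ^ (k : ℕ) = 1 := by
    rw [pow_mul, ← mul_pow, ← zpow_natCast q 2, ← zpow_add₀ hq]
    simp
  rw [ser2Coeff]
  split_ifs
  · linear_combination w * hinv
  · linear_combination -(q ^ (-n : ℤ) * w) * hinv

lemma sum_qBinom_smul_prod_ser2Coeff_eq_zero {n : ℕ} {q : K} (hq : q ≠ 0)
    (hn : qFact q (n + 1) ≠ 0) (w : K) :
    ∑ r ∈ range (n + 2), qBinom q (n + 1) r •
      ∏ k, (C (ser2Coeff n q w r k).1 * X + C (ser2Coeff n q w r k).2) = 0 := by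
  rw [← sum_qBinom_smul_prod_mul_prod_eq_zero hq hn X (C w)]
  refine sum_congr rfl fun r hr ↦ ?_
  rw [← prod_fin_ite_lt (mem_range_succ_iff.mp hr)]
  congr 1
  refine prod_congr rfl fun k _ ↦ ?_
  rw [ser2Coeff]
  split_ifs <;> simp only [smul_eq_C_mul, C_neg, C_mul, C_1] <;> ring

end Ser2

/-- The combinatorial identity (Ser2):
∑_{σ ∈ S_m} ∑_{r=0}^{m} sgn(σ) [m choose r] (∏_{k=1}^{r} (w − q^{1−m} z_{σ(k)}))
(∏_{k=r+1}^{m} (z_{σ(k)} − q^{1−m} w)) ∏_{i<j} (z_{σ(i)} − q^{−2} z_{σ(j)}) = 0. -/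
theorem combinatorial_identity_Ser2 {K : Type*} [Field K] (m : ℕ) (hm : 1 ≤ m) (q : K)
    (hq : q ≠ 0) (hroot : ∀ k : ℕ, 1 ≤ k → k ≤ m → q ^ (2 * k) ≠ 1)
    (w : K) (z : Fin m → K) :
    ∑ σ : Equiv.Perm (Fin m), ∑ r ∈ Finset.range (m + 1),
      ((Equiv.Perm.sign σ : ℤ) : K) * qBinom q m r *
        (∏ k : Fin m,
          if (k : ℕ) < r then w - q ^ (1 - (m : ℤ)) * z (σ k)
          else z (σ k) - q ^ (1 - (m : ℤ)) * w) *
        ∏ p ∈ Finset.univ.filter (fun p : Fin m × Fin m => p.1 < p.2),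
          (z (σ p.1) - q ^ (-2 : ℤ) * z (σ p.2)) = 0 := by
  obtain ⟨n, rfl⟩ := Nat.exists_eq_add_of_le' hm
  obtain ⟨φ, hφ⟩ := exists_linearMap_polynomial_of_symmetric (twistedAlternant (q ^ (-2 : ℤ)) z)
    (twistedAlternant_comp_perm _ z)
  have hsum : ∑ r ∈ range (n + 2),
      qBinom q (n + 1) r * twistedAlternant (q ^ (-2 : ℤ)) z (ser2Coeff n q w r) = 0 := by
    have hφ0 := congrArg φ
      (sum_qBinom_smul_prod_ser2Coeff_eq_zero hq (qFact_ne_zero hq hroot) w)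
    simpa only [map_sum, map_smul, ← hφ, map_zero, smul_eq_mul] using hφ0
  have hexp : 1 - ((n + 1 : ℕ) : ℤ) = -n := by
    push_cast
    ring
  rw [sum_comm, ← hsum]
  refine sum_congr rfl fun r _ ↦ ?_
  simp only [hexp, twistedAlternant_apply, ser2Coeff_linear_eq hq, mul_sum]
  refine sum_congr rfl fun σ _ ↦ ?_
  simp only [twistedVandermonde, Function.comp_apply]
  ring
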